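/- (Fourier shattering.) Let H' ≤ H ≤ G = 𝔽₂ⁿ be subgroups, let f, g : H → ℝ_{≥0}, let d₁, d₂ > 0, and let z₁ ∈ H. Suppose ∑_η f̂(η)·ĝ(η)·(-1)^{⟨η,z₁⟩} ≤ d₁d₂/2, where the sum is over characters η of H that are trivial on H' (i.e. representatives η ∈ 𝔽₂ⁿ of distinct restrictions to H of forms ⟨·,η⟩ vanishing on H'). Define f̄(v) = E_{y ∈ H'}[f(v+y)] and ḡ(v) = E_{y ∈ H'}[g(v+y)] for v ∈ H. Then, with v drawn uniformly from a set of coset representatives of H' in H, either Pr_v[ f̄(v) < (3/4)·d₁ ] > 1/20 or Pr_v[ ḡ(v) < (3/4)·d₂ ] > 1/20. -/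

import Mathlib

open scoped Classical BigOperators

noncomputable section

/-- The group `G = 𝔽₂ⁿ`. -/
abbrev G (n : ℕ) : Type := Fin n → ZMod 2

/-- The coset `H + g` (note that `-g = g` in `𝔽₂ⁿ`). -/
def coset {n : ℕ} (H : AddSubgroup (G n)) (g : G n) : Set (G n) := {x | x + g ∈ H}

/-- The entropy function `f(x) = x log x` (with `f 0 = 0`). -/
def ent (x : ℝ) : ℝ := x * Real.log x

/-- The density of `A` on the coset `H + g`. -/
def dens {n : ℕ} (A : Set (G n)) (H : AddSubgroup (G n)) (g : G n) : ℝ :=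
  (Nat.card ↥(A ∩ coset H g) : ℝ) / (Nat.card ↥H : ℝ)

/-- Mean entropy `F_A(G, H)` of partitioning `G` into cosets of `H`. -/
def meanEntG {n : ℕ} (A : Set (G n)) (H : AddSubgroup (G n)) : ℝ :=
  (∑ g : G n, ent (dens A H g)) / (Fintype.card (G n) : ℝ)

/-- Mean entropy `F_A(H + g, H')` of partitioning the coset `H + g` into cosets of `H'`. -/
def meanEntCoset {n : ℕ} (A : Set (G n)) (H H' : AddSubgroup (G n)) (g : G n) : ℝ :=
  (∑ g₁ : ↥H, ent (dens A H' (g + ↑g₁))) / (Nat.card ↥H : ℝ)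

/-- The standard bilinear form on `𝔽₂ⁿ`. -/
def dotp {n : ℕ} (x y : G n) : ZMod 2 := ∑ i, x i * y i

/-- The character value `(-1)^{⟨x, y⟩}`. -/
def chi {n : ℕ} (x y : G n) : ℝ := if dotp x y = 0 then 1 else -1

/-- Fourier coefficient `f̂_H^g(η) = E_{x ∈ H} [f(x + g) · (-1)^{⟨x, η⟩}]`. -/
def fCoeff {n : ℕ} (H : AddSubgroup (G n)) (g : G n) (f : G n → ℝ) (η : G n) : ℝ :=
  (∑ x : ↥H, f (↑x + g) * chi ↑x η) / (Nat.card ↥H : ℝ)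

/-- `f` is `ρ`-superregular on `H + g`: every Fourier coefficient at a character that is
nontrivial on `H` is at most `ρ` times the zeroth coefficient in absolute value. -/
def SuperregularOn {n : ℕ} (H : AddSubgroup (G n)) (g : G n) (ρ : ℝ) (f : G n → ℝ) : Prop :=
  ∀ η : G n, (∃ x ∈ H, dotp x η ≠ 0) →
    |fCoeff H g f η| ≤ ρ * fCoeff H g f 0

/-- `H'` `(α, β, k)`-shatters `A` on `H + g`. -/
def Shatters {n : ℕ} (H' H : AddSubgroup (G n)) (A : Set (G n)) (g : G n)
    (α β k : ℝ) : Prop :=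
  (Nat.card ↥H : ℝ) / (Nat.card ↥H' : ℝ) ≤ (2 : ℝ) ^ k ∧
  α ≤ (Nat.card {g' : ↥H //
        (Nat.card ↥(A ∩ coset H' (g + ↑g')) : ℝ) ≤ β * dens A H g * (Nat.card ↥H' : ℝ)} : ℝ) /
      (Nat.card ↥H : ℝ)

/-- Number of triangles `(a, b, c)`, `a + b + c = 0`, with `a ∈ S₁`, `b ∈ S₂`, `c ∈ S₃`. -/
def triBetween {n : ℕ} (S₁ S₂ S₃ : Set (G n)) : ℕ :=
  Nat.card {p : G n × G n × G n // p.1 ∈ S₁ ∧ p.2.1 ∈ S₂ ∧ p.2.2 ∈ S₃ ∧ p.1 + p.2.1 + p.2.2 = 0}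

/-- Number of triangles in `A`. -/
def triCount {n : ℕ} (A : Set (G n)) : ℕ := triBetween A A A

/-- The annihilator of `K`: characters trivial on `K`. -/
def ann {n : ℕ} (K : AddSubgroup (G n)) : AddSubgroup (G n) where
  carrier := {η | ∀ x ∈ K, dotp x η = 0}
  zero_mem' := by intro x _; simp [dotp]
  add_mem' := by
    intro a b ha hb x hx
    have h : dotp x (a + b) = dotp x a + dotp x b := by
      simp [dotp, mul_add, Finset.sum_add_distrib]
    rw [h, ha x hx, hb x hx, add_zero]
  neg_mem' := by
    intro a ha x hx
    have h : dotp x (-a) = -dotp x a := by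
      simp [dotp]
    rw [h, ha x hx, neg_zero]

/-- Average of `f` over the coset `v + H'`. -/
def fbar {n : ℕ} (H' : AddSubgroup (G n)) (f : G n → ℝ) (v : G n) : ℝ :=
  (∑ y : ↥H', f (v + ↑y)) / (Nat.card ↥H' : ℝ)

/-- Tower function: `tower 0 = 1`, `tower (i+1) = 2 ^ tower i`. -/
def tower : ℕ → ℕ
  | 0 => 1
  | k + 1 => 2 ^ tower k

/-- `A` is `ε`-far from triangle-free: at least `ε N` elements must be removed from `A`
to destroy all triangles. -/
def FarFromTriangleFree {n : ℕ} (A : Set (G n)) (ε : ℝ) : Prop :=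
  ∀ B ⊆ A, (∀ x ∈ B, ∀ y ∈ B, ∀ z ∈ B, x + y + z ≠ 0) →
    ε * 2 ^ n ≤ (Nat.card ↥(A \ B) : ℝ)

/-- The set of elements of a triangle. -/
def elems {n : ℕ} (p : G n × G n × G n) : Set (G n) := {p.1, p.2.1, p.2.2}

/-!
Averaging `f` and `g` over cosets of `H'` turns the Fourier sum over characters trivial on `H'` into
the correlation `E_{v ∈ H} f̄(v) ḡ(v + z₁)`: summing the characters first leaves only the pairs
`(x, y)` with `x + y + z₁ ∈ H'`. If `f̄ < (3/4) d₁` and `ḡ < (3/4) d₂` each held with probability at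
most `1/20`, then `f̄(v) ≥ (3/4) d₁` and `ḡ(v + z₁) ≥ (3/4) d₂` would hold simultaneously with
probability at least `9/10`, making the correlation at least `(9/10)(9/16) d₁d₂ > d₁d₂/2`.
-/

section Duality

variable {n : ℕ}

/-- The standard form `dotp` as a bilinear form over `ZMod 2`, for which `ann` is the orthogonal
complement. -/
def dotpForm (n : ℕ) : LinearMap.BilinForm (ZMod 2) (G n) := dotProductBilin (ZMod 2) (ZMod 2)

theorem dotp_comm (x y : G n) : dotp x y = dotp y x := dotProduct_comm x y

theorem isRefl_dotpForm : (dotpForm n).IsRefl := fun x y h => (dotp_comm y x).trans h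

theorem nondegenerate_dotpForm : (dotpForm n).Nondegenerate :=
  ⟨dotProduct_eq_zero, fun y h => dotProduct_eq_zero y fun x => (dotp_comm y x).trans (h x)⟩

theorem ann_eq_orthogonal (K : AddSubgroup (G n)) :
    ann K = ((dotpForm n).orthogonal (K.toZModSubmodule 2)).toAddSubgroup := rfl

theorem ann_ann (K : AddSubgroup (G n)) : ann (ann K) = K := by
  rw [ann_eq_orthogonal (ann K), ann_eq_orthogonal K]
  exact congrArg Submodule.toAddSubgroup <| LinearMap.BilinForm.orthogonal_orthogonal
    nondegenerate_dotpForm isRefl_dotpForm (K.toZModSubmodule 2)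

theorem card_mul_card_ann (K : AddSubgroup (G n)) :
    Nat.card K * Nat.card (ann K) = Nat.card (G n) := by
  let W := K.toZModSubmodule 2
  let W' := (dotpForm n).orthogonal W
  have hfinrank : Module.finrank (ZMod 2) W + Module.finrank (ZMod 2) W' =
      Module.finrank (ZMod 2) (G n) := by
    rw [LinearMap.BilinForm.finrank_orthogonal nondegenerate_dotpForm]
    exact Nat.add_sub_cancel' W.finrank_le
  rw [ann_eq_orthogonal]
  calc Nat.card W * Nat.card W'
      = Nat.card (ZMod 2) ^ Module.finrank (ZMod 2) W *
          Nat.card (ZMod 2) ^ Module.finrank (ZMod 2) W' :=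
        congrArg₂ _ Module.natCard_eq_pow_finrank Module.natCard_eq_pow_finrank
    _ = Nat.card (G n) := by
        rw [← pow_add, hfinrank, ← Module.natCard_eq_pow_finrank]

end Duality

section Characters

variable {n : ℕ}

theorem chi_comm (x y : G n) : chi x y = chi y x := by
  simp only [chi, dotp_comm]

theorem chi_add_left (x y η : G n) : chi (x + y) η = chi x η * chi y η := by
  have hdotp : dotp (x + y) η = dotp x η + dotp y η := add_dotProduct x y η
  unfold chi
  rw [hdotp]
  generalize dotp x η = a
  generalize dotp y η = b
  have hbit : ∀ c : ZMod 2, c = 0 ∨ c = 1 := by decide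
  rcases hbit a with rfl | rfl <;> rcases hbit b with rfl | rfl <;>
    simp [CharTwo.add_self_eq_zero (1 : ZMod 2)]

theorem chi_eq_one_iff {x η : G n} : chi x η = 1 ↔ dotp x η = 0 := by
  unfold chi
  split_ifs with h <;> norm_num [h]

/-- The function `x ↦ (-1)^{⟨x, η⟩}` as an additive character of `G n`, giving access to the
orthogonality of characters. -/
def chiChar (η : G n) : AddChar (G n) ℝ where
  toFun x := chi x η
  map_zero_eq_one' := chi_eq_one_iff.2 (zero_dotProduct η)
  map_add_eq_mul' x y := chi_add_left x y η

theorem sum_chi_left (K : AddSubgroup (G n)) (η : G n) :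
    ∑ x : K, chi x η = if η ∈ ann K then (Nat.card K : ℝ) else 0 := by
  have htrivial : (chiChar η).compAddMonoidHom K.subtype = 0 ↔ η ∈ ann K := by
    rw [AddChar.eq_zero_iff]
    exact ⟨fun h x hx => chi_eq_one_iff.1 (h ⟨x, hx⟩), fun h x => chi_eq_one_iff.2 (h x x.2)⟩
  have hsum := AddChar.sum_eq_ite ((chiChar η).compAddMonoidHom K.subtype)
  simpa only [htrivial, Nat.card_eq_fintype_card] using! hsum

theorem sum_chi_ann (K : AddSubgroup (G n)) (x : G n) :
    ∑ η : ann K, chi x η = if x ∈ K then (Nat.card (ann K) : ℝ) else 0 := by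
  simp only [chi_comm x, sum_chi_left, ann_ann]

end Characters

section CosetAverage

variable {n : ℕ} {H' H : AddSubgroup (G n)}

theorem fbar_nonneg {f : G n → ℝ} (hf : ∀ x, 0 ≤ f x) (v : G n) : 0 ≤ fbar H' f v :=
  div_nonneg (Finset.sum_nonneg fun _ _ => hf _) (Nat.cast_nonneg _)

theorem fbar_add_of_mem (f : G n → ℝ) (v : G n) {b : G n} (hb : b ∈ H') :
    fbar H' f (v + b) = fbar H' f v := by
  simp only [fbar, add_assoc]
  congr 1
  exact Equiv.sum_comp (Equiv.addLeft (⟨b, hb⟩ : H')) fun y => f (v + y)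

theorem card_mul_fbar (f : G n → ℝ) (v : G n) :
    Nat.card H' * fbar H' f v = ∑ y : H', f (v + y) :=
  mul_div_cancel₀ _ (Nat.cast_ne_zero.2 Nat.card_pos.ne')

theorem sum_fbar_mul (hle : H' ≤ H) (f : G n → ℝ) {k : G n → ℝ}
    (hk : ∀ v, ∀ b ∈ H', k (v + b) = k v) :
    ∑ x : H, fbar H' f x * k x = ∑ x : H, f x * k x := by
  have hcard : (Nat.card H' : ℝ) ≠ 0 := Nat.cast_ne_zero.2 Nat.card_pos.ne'
  refine mul_left_cancel₀ hcard ?_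
  calc (Nat.card H' : ℝ) * ∑ x : H, fbar H' f x * k x
      = ∑ x : H, ∑ b : H', f (x + b) * k x := by
        simp only [Finset.mul_sum, ← mul_assoc, card_mul_fbar, Finset.sum_mul]
    _ = ∑ b : H', ∑ x : H, f (x + b) * k (x + b) := by
        rw [Finset.sum_comm]
        simp only [hk _ _ (Subtype.prop _)]
    _ = ∑ _b : H', ∑ x : H, f x * k x :=
        Finset.sum_congr rfl fun b _ =>
          Equiv.sum_comp (Equiv.addRight (⟨b, hle b.2⟩ : H)) fun x => f x * k x
    _ = Nat.card H' * ∑ x : H, f x * k x := by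
        rw [Finset.sum_const, nsmul_eq_mul, Finset.card_univ, Nat.card_eq_fintype_card]

theorem card_mul_fbar_eq_sum_ite (hle : H' ≤ H) (g : G n → ℝ) {t : G n} (ht : t ∈ H) :
    Nat.card H' * fbar H' g t = ∑ y : H, if t + y ∈ H' then g y else 0 := by
  have hcancel (u : G n) : t + (t + u) = u := by
    rw [← add_assoc, ZModModule.add_self, zero_add]
  rw [card_mul_fbar]
  let translate (u : H') : H := ⟨t + u, H.add_mem ht (hle u.2)⟩
  refine Fintype.sum_of_injective translate ?_ _ _ ?_ ?_
  · intro u w huw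
    exact Subtype.ext (add_left_cancel (congrArg Subtype.val huw))
  · intro y hy
    exact if_neg fun hmem => hy ⟨⟨t + y, hmem⟩, Subtype.ext (hcancel y)⟩
  · intro u
    simp [translate, hcancel]

end CosetAverage

section Parseval

variable {n : ℕ} {H' H : AddSubgroup (G n)}

theorem fCoeff_mul_fCoeff_mul_chi (H : AddSubgroup (G n)) (f g : G n → ℝ) (η z : G n) :
    fCoeff H 0 f η * fCoeff H 0 g η * chi η z =
      (∑ x : H, ∑ y : H, f x * g y * chi (x + z + y : G n) η) / (Nat.card H : ℝ) ^ 2 := by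
  simp only [fCoeff, add_zero]
  rw [div_mul_div_comm, div_mul_eq_mul_div, ← sq, Finset.sum_mul_sum]
  simp only [Finset.sum_mul, chi_add_left, chi_comm η z]
  congr 1
  refine Finset.sum_congr rfl fun x _ => Finset.sum_congr rfl fun y _ => ?_
  ring

theorem sum_mul_sum_chi_ann (hle : H' ≤ H) (g : G n → ℝ) {t : G n} (ht : t ∈ H) :
    ∑ y : H, g y * ∑ η : ann H', chi (t + y : G n) η = Nat.card (G n) * fbar H' g t := by
  calc ∑ y : H, g y * ∑ η : ann H', chi (t + y : G n) η
      = (∑ y : H, if t + y ∈ H' then g y else 0) * Nat.card (ann H') := by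
        simp only [sum_chi_ann, mul_ite, mul_zero, Finset.sum_mul, ite_mul, zero_mul]
    _ = Nat.card (G n) * fbar H' g t := by
        rw [← card_mul_fbar_eq_sum_ite hle g ht, ← card_mul_card_ann H', Nat.cast_mul,
          mul_right_comm]

theorem sum_ann_fCoeff_mul_fCoeff (hle : H' ≤ H) (f g : G n → ℝ) {z : G n} (hz : z ∈ H) :
    ∑ η : ann H', fCoeff H 0 f η * fCoeff H 0 g η * chi η z =
      Nat.card (G n) * (∑ v : H, fbar H' f v * fbar H' g (v + z)) / (Nat.card H : ℝ) ^ 2 := by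
  have hshift (v b : G n) (hb : b ∈ H') : fbar H' g (v + b + z) = fbar H' g (v + z) := by
    rw [add_right_comm, fbar_add_of_mem g _ hb]
  simp only [fCoeff_mul_fCoeff_mul_chi, ← Finset.sum_div]
  congr 1
  calc ∑ η : ann H', ∑ x : H, ∑ y : H, f x * g y * chi (x + z + y : G n) η
      = ∑ x : H, f x * ∑ y : H, g y * ∑ η : ann H', chi (x + z + y : G n) η := by
        rw [Finset.sum_comm]
        refine Finset.sum_congr rfl fun x _ => ?_
        rw [Finset.sum_comm]
        simp only [Finset.mul_sum, mul_assoc]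
    _ = ∑ x : H, f x * (Nat.card (G n) * fbar H' g (x + z)) :=
        Finset.sum_congr rfl fun x _ => by rw [sum_mul_sum_chi_ann hle g (H.add_mem x.2 hz)]
    _ = Nat.card (G n) * ∑ v : H, fbar H' f v * fbar H' g (v + z) := by
        rw [sum_fbar_mul hle f (k := fun v => fbar H' g (v + z)) hshift]
        simp only [Finset.mul_sum, mul_left_comm]

-- Each character of `H` trivial on `H'` has `|ann H|` representatives in `ann H'`: dividing by
-- this number makes the left side a sum over characters of `H`.
theorem sum_ann_fCoeff_mul_fCoeff_div_card (hle : H' ≤ H) (f g : G n → ℝ) {z : G n}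
    (hz : z ∈ H) :
    (∑ η : ann H', fCoeff H 0 f η * fCoeff H 0 g η * chi η z) / Nat.card (ann H) =
      (∑ v : H, fbar H' f v * fbar H' g (v + z)) / Nat.card H := by
  have hH : (Nat.card H : ℝ) ≠ 0 := Nat.cast_ne_zero.2 Nat.card_pos.ne'
  have hann : (Nat.card (ann H) : ℝ) ≠ 0 := Nat.cast_ne_zero.2 Nat.card_pos.ne'
  rw [sum_ann_fCoeff_mul_fCoeff hle f g hz, ← card_mul_card_ann H, Nat.cast_mul]
  field_simp

end Parseval

theorem mul_card_sub_card_lt_le_sum_mul {α R : Type*} [Fintype α] [CommRing R] [LinearOrder R]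
    [IsStrictOrderedRing R] {F K : α → R} (hF : ∀ v, 0 ≤ F v) (hK : ∀ v, 0 ≤ K v) {a b : R}
    (ha : 0 ≤ a) (hb : 0 ≤ b) :
    a * b * (Nat.card α - Nat.card {v // F v < a} - Nat.card {v // K v < b}) ≤
      ∑ v, F v * K v := by
  have hcard (P : α → Prop) [DecidablePred P] :
      (Nat.card {v // P v} : R) = ∑ v, if P v then 1 else 0 := by
    simp [Nat.card_eq_fintype_card, Fintype.card_subtype]
  have hpoint (v : α) : a * b * (1 - (if F v < a then 1 else 0) - if K v < b then 1 else 0) ≤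
      F v * K v := by
    have hab := mul_nonneg ha hb
    have hFK := mul_nonneg (hF v) (hK v)
    split_ifs with hFa hKb hKb
    · linarith
    · linarith
    · linarith
    · linarith [mul_le_mul (not_lt.1 hFa) (not_lt.1 hKb) hb (hF v)]
  calc a * b * (Nat.card α - Nat.card {v // F v < a} - Nat.card {v // K v < b})
      = ∑ v, a * b * (1 - (if F v < a then 1 else 0) - if K v < b then 1 else 0) := by
        rw [← Finset.mul_sum, Finset.sum_sub_distrib, Finset.sum_sub_distrib, hcard, hcard]
        simp
    _ ≤ ∑ v, F v * K v := Finset.sum_le_sum fun v _ => hpoint v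

theorem mul_one_sub_le_sum_ann_fCoeff_mul_fCoeff {n : ℕ} {H' H : AddSubgroup (G n)}
    (hle : H' ≤ H) {f g : G n → ℝ} (hf : ∀ x, 0 ≤ f x) (hg : ∀ x, 0 ≤ g x) {a b : ℝ}
    (ha : 0 ≤ a) (hb : 0 ≤ b) {z : G n} (hz : z ∈ H) :
    a * b * (1 - (Nat.card {v : H // fbar H' f v < a} : ℝ) / Nat.card H -
        (Nat.card {v : H // fbar H' g v < b} : ℝ) / Nat.card H) ≤
      (∑ η : ann H', fCoeff H 0 f η * fCoeff H 0 g η * chi η z) / Nat.card (ann H) := by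
  have hH : (0 : ℝ) < Nat.card H := Nat.cast_pos.2 Nat.card_pos
  have hshift : Nat.card {v : H // fbar H' g (v + z) < b} =
      Nat.card {v : H // fbar H' g v < b} :=
    Nat.card_congr ((Equiv.addRight (⟨z, hz⟩ : H)).subtypeEquiv fun _ => Iff.rfl)
  have hbound := mul_card_sub_card_lt_le_sum_mul (fun v : H => fbar_nonneg (H' := H') hf v)
    (fun v : H => fbar_nonneg (H' := H') hg (v + z)) ha hb
  rw [sum_ann_fCoeff_mul_fCoeff_div_card hle f g hz, le_div_iff₀ hH, ← hshift, mul_assoc,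
    sub_mul, sub_mul, one_mul, div_mul_cancel₀ _ hH.ne', div_mul_cancel₀ _ hH.ne']
  exact hbound

theorem fourier_shattering {n : ℕ} (H' H : AddSubgroup (G n)) (hle : H' ≤ H)
    (f g : G n → ℝ) (hf : ∀ x, 0 ≤ f x) (hg : ∀ x, 0 ≤ g x)
    (d₁ d₂ : ℝ) (hd₁ : 0 < d₁) (hd₂ : 0 < d₂) (z₁ : G n) (hz : z₁ ∈ H)
    (hsum : (∑ η : ↥(ann H'), fCoeff H 0 f ↑η * fCoeff H 0 g ↑η * chi ↑η z₁)
              / (Nat.card ↥(ann H) : ℝ) ≤ d₁ * d₂ / 2) :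
    1 / 20 < (Nat.card {v : ↥H // fbar H' f ↑v < 3 / 4 * d₁} : ℝ) / (Nat.card ↥H : ℝ) ∨
    1 / 20 < (Nat.card {v : ↥H // fbar H' g ↑v < 3 / 4 * d₂} : ℝ) / (Nat.card ↥H : ℝ) := by
  by_contra! ⟨hf_rare, hg_rare⟩
  have hcorr := mul_one_sub_le_sum_ann_fCoeff_mul_fCoeff hle hf hg
    (a := 3 / 4 * d₁) (b := 3 / 4 * d₂) (by positivity) (by positivity) hz
  have hd : 0 < d₁ * d₂ := mul_pos hd₁ hd₂
  have hlower : 3 / 4 * d₁ * (3 / 4 * d₂) * (9 / 10) ≤ d₁ * d₂ / 2 :=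
    (mul_le_mul_of_nonneg_left (by linarith) (by positivity)).trans (hcorr.trans hsum)
  linarith
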